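/- For every integer l ≥ 2 there exist constants a(l) > 0 and b(l) > 0 such that for all integers p ≥ 2 with pl even: a(l)^p · p^{p(l/2−1)} ≤ μ_{l,p}(standard) ≤ μ*_{l,p}(full) ≤ b(l)^p · p^{p(l/2−1)}. -/

import Mathlib

/-!
A double-covering `{A_1, …, A_p}` is the same thing as a loopless multigraph on `p` vertices: the
points of the union are the edges, each point being an edge between the two sets that contain it,
and `A_k` is the set of edges at the vertex `k` (`exists_mdl`, `isDoubleCover_mdl`). Isomorphism of
set-collections is isomorphism of graphs, without regard to the names of edges and vertices, and
`#A_k` is the degree of the vertex `k`. So the theorem counts unlabelled graphs.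

*Upper bound.* A connected graph with `p` vertices, `e` edges and degrees at most `l` has few
automorphisms: one is determined by the image of a single vertex together with, for each edge, its
local number (in `Fin l`) at each of its ends (`relabel_unique`). Hence the `p! * e!` labellings of
each of `N` pairwise non-isomorphic graphs give `N * p! * e! ≤ (p ^ 2) ^ e * (p * l ^ (2 * e))`
(`card_mul_le`). As `2 * e ≤ p * l`, this gives a bound `β ^ p * p ^ (p * (l / 2 - 1))` for connected
coverings (`bnd_conn`). Splitting off one component at a time and summing a geometric series
extends it to all coverings at the cost of a factor `2 ^ p` (`bnd_all`); here it matters that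
`p ↦ p ^ (l / 2 - 1)` is monotone.

*Lower bound.* A connected covering is standard, having only one component. Write
`l = 2 * (k + 1) + r` with `r ≤ 1`. The union of a fixed Hamiltonian cycle, the graphs of `k`
derangements of the vertices, and, if `r = 1` (so that `p` is even), a perfect matching between the
two halves of the vertex set, is connected and `l`-regular. Because the cycle is fixed, an
isomorphism class contains at most `p * l ^ #E` of these graphs (`card_le_muStandard`). There are
at least `((p - 1)!) ^ k * ((p / 2)!) ^ r` of them, which is
`p ^ (p * (l / 2 - 1))` up to an exponential factor (`gr_le_alp_mul`).

The middle inequality holds because the standard coverings are among those counted by the full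
number, which is finite by the upper bound.
-/

/-- The union of all member sets of a set-collection. -/
def unionC (C : Multiset (Finset ℕ)) : Finset ℕ := C.sup

/-- A set-collection is a double-covering if every point of its union lies in
exactly two member sets (counted with multiplicity). -/
def IsDoubleCover (C : Multiset (Finset ℕ)) : Prop :=
  ∀ a ∈ unionC C, Multiset.countP (fun A => a ∈ A) C = 2

/-- A set-collection is an even-covering if every point of its union lies in an
even number of member sets (counted with multiplicity). -/
def IsEvenCover (C : Multiset (Finset ℕ)) : Prop :=
  ∀ a ∈ unionC C, Even (Multiset.countP (fun A => a ∈ A) C)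

/-- Two set-collections are isomorphic: there is a bijection between their
unions mapping the first multiset of sets onto the second. -/
def Isomorphic (C D : Multiset (Finset ℕ)) : Prop :=
  ∃ φ : ℕ → ℕ, Set.BijOn φ ↑(unionC C) ↑(unionC D) ∧
    C.map (Finset.image φ) = D

/-- A set-collection is connected if any two member sets are joined by a chain
of member sets with consecutive nonempty intersections. -/
def ConnectedColl (C : Multiset (Finset ℕ)) : Prop :=
  ∀ A ∈ C, ∀ B ∈ C,
    Relation.ReflTransGen (fun X Y => X ∈ C ∧ Y ∈ C ∧ (X ∩ Y).Nonempty) A B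

/-- `D` is a connected component of `C`: a nonempty connected sub-multiset
separated from the rest of `C`. -/
def IsComponent (C D : Multiset (Finset ℕ)) : Prop :=
  D ≤ C ∧ D ≠ 0 ∧ ConnectedColl D ∧ ∀ B ∈ C - D, ∀ A ∈ D, B ∩ A = ∅

/-- A set-collection is standard if no two of its distinct connected components
are isomorphic. -/
def IsStandard (C : Multiset (Finset ℕ)) : Prop :=
  ∀ D E : Multiset (Finset ℕ),
    IsComponent C D → IsComponent C E → D ≠ E → ¬ Isomorphic D E

/-- `μ_{l,p}(full)`: the number of isomorphism classes of double-coverings of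
`p` sets each of cardinality `l`. -/
noncomputable def muFull (l p : ℕ) : ℕ :=
  Nat.card (Quot (fun C D : {C : Multiset (Finset ℕ) //
      Multiset.card C = p ∧ IsDoubleCover C ∧ ∀ A ∈ C, A.card = l} =>
    Isomorphic C.1 D.1))

/-- `μ_{l,p}(standard)`: the number of isomorphism classes of standard
double-coverings of `p` sets each of cardinality `l`. -/
noncomputable def muStandard (l p : ℕ) : ℕ :=
  Nat.card (Quot (fun C D : {C : Multiset (Finset ℕ) //
      Multiset.card C = p ∧ IsDoubleCover C ∧ IsStandard C ∧ ∀ A ∈ C, A.card = l} =>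
    Isomorphic C.1 D.1))

/-- `μ*_{l,p}(full)`: the number of isomorphism classes of double-coverings of
`p` sets each of cardinality between `1` and `l`. -/
noncomputable def muStarFull (l p : ℕ) : ℕ :=
  Nat.card (Quot (fun C D : {C : Multiset (Finset ℕ) //
      Multiset.card C = p ∧ IsDoubleCover C ∧ ∀ A ∈ C, 1 ≤ A.card ∧ A.card ≤ l} =>
    Isomorphic C.1 D.1))

/-- The family `D_{l,p}` of double-coverings of `p` sets of cardinality `l`
contained in `{1,…,pl/2}`. -/
def Dfull (l p : ℕ) : Set (Multiset (Finset ℕ)) :=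
  {C | Multiset.card C = p ∧ IsDoubleCover C ∧
    (∀ A ∈ C, A ⊆ Finset.Icc 1 (p * l / 2)) ∧ ∀ A ∈ C, A.card = l}

/-- The family `D*_{l,p}` of double-coverings of `p` sets of cardinality
between `1` and `l` contained in `{1,…,pl/2}`. -/
def Dstar (l p : ℕ) : Set (Multiset (Finset ℕ)) :=
  {C | Multiset.card C = p ∧ IsDoubleCover C ∧
    (∀ A ∈ C, A ⊆ Finset.Icc 1 (p * l / 2)) ∧ ∀ A ∈ C, 1 ≤ A.card ∧ A.card ≤ l}

/-- The Rademacher function `r_n(x) = sign (sin (2^n π x))`. -/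
noncomputable def rademacher (n : ℕ) (x : ℝ) : ℝ :=
  Real.sign (Real.sin (2 ^ n * Real.pi * x))

/-- The Walsh function `w_A = ∏_{k ∈ A} r_k`. -/
noncomputable def walsh (A : Finset ℕ) (x : ℝ) : ℝ :=
  ∏ k ∈ A, rademacher k x

/-! ### Set-collections and graphs -/

section
open Finset

theorem mem_unionC {C : Multiset (Finset ℕ)} {a : ℕ} : a ∈ unionC C ↔ ∃ A ∈ C, a ∈ A := by
  unfold unionC
  induction C using Multiset.induction_on with
  | empty => simp
  | cons A C ih => simp [ih]

theorem unionC_map (C : Multiset (Finset ℕ)) (φ : ℕ → ℕ) :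
    unionC (C.map (Finset.image φ)) = (unionC C).image φ := by
  ext a
  simp only [mem_unionC, Multiset.mem_map, Finset.mem_image]
  constructor
  · rintro ⟨_, ⟨A, hA, rfl⟩, h⟩
    obtain ⟨b, hb, rfl⟩ := Finset.mem_image.1 h
    exact ⟨b, ⟨A, hA, hb⟩, rfl⟩
  · rintro ⟨b, ⟨A, hA, hb⟩, rfl⟩
    exact ⟨_, ⟨A, hA, rfl⟩, Finset.mem_image_of_mem _ hb⟩

/-- Injectivity on the union already makes a relabelling an isomorphism. -/
theorem isomorphic_of_injOn {C D : Multiset (Finset ℕ)} (φ : ℕ → ℕ)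
    (h : Set.InjOn φ ↑(unionC C)) (hD : C.map (Finset.image φ) = D) : Isomorphic C D := by
  refine ⟨φ, ?_, hD⟩
  rw [← hD, unionC_map, Finset.coe_image]
  exact h.bijOn_image

theorem Isomorphic.refl (C : Multiset (Finset ℕ)) : Isomorphic C C :=
  isomorphic_of_injOn id Function.injective_id.injOn (by
    rw [show Finset.image (id : ℕ → ℕ) = id from funext fun s => Finset.image_id]; simp)

theorem Isomorphic.trans {C D F : Multiset (Finset ℕ)} (h : Isomorphic C D)
    (h' : Isomorphic D F) : Isomorphic C F := by
  obtain ⟨φ, hφ, rfl⟩ := h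
  obtain ⟨ψ, hψ, rfl⟩ := h'
  refine ⟨ψ ∘ φ, hψ.comp hφ, ?_⟩
  rw [Multiset.map_map]
  refine Multiset.map_congr rfl fun A _ => ?_
  simp [Finset.image_image]

theorem Isomorphic.symm {C D : Multiset (Finset ℕ)} (h : Isomorphic C D) : Isomorphic D C := by
  obtain ⟨φ, hφ, rfl⟩ := h
  have hinv := hφ.invOn_invFunOn
  refine ⟨Function.invFunOn φ ↑(unionC C), hφ.symm hinv.symm, ?_⟩
  rw [Multiset.map_map]
  conv_rhs => rw [← Multiset.map_id C]
  refine Multiset.map_congr rfl fun A hA => ?_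
  simp only [Function.comp, Finset.image_image, id]
  conv_rhs => rw [← Finset.image_id (s := A)]
  refine Finset.image_congr fun a ha => ?_
  exact hinv.1 (Finset.mem_coe.2 (mem_unionC.2 ⟨A, hA, ha⟩))

/-- A multigraph with vertices `V` and edges `E` is encoded by the ends `h : E → V × V` of its
edges; the order of the two ends is immaterial. `Inc h v e` says that `v` is an end of `e`. -/
def Inc {V E : Type} (h : E → V × V) (v : V) (e : E) : Prop := v = (h e).1 ∨ v = (h e).2

open Classical in
/-- The set of edges at `v`. -/
noncomputable def edgesAt {V E : Type} [Fintype E] (h : E → V × V) (v : V) : Finset E :=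
  univ.filter (Inc h v)

/-- The set-collection dual to a graph: one set for each vertex, consisting of the edges at that
vertex, where the edge `e` is named by the natural number `ε e`. -/
noncomputable def mdl {V E : Type} [Fintype V] [Fintype E] (h : E → V × V) (ε : E → ℕ) :
    Multiset (Finset ℕ) :=
  (univ : Finset V).val.map fun v => (edgesAt h v).image ε

theorem mem_edgesAt {V E : Type} [Fintype E] {h : E → V × V} {v : V} {e : E} :
    e ∈ edgesAt h v ↔ Inc h v e := by
  simp [edgesAt]

section model
variable {V E : Type} [Fintype V] [Fintype E]

theorem mem_mdl {h : E → V × V} {ε : E → ℕ} {A : Finset ℕ} :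
    A ∈ mdl h ε ↔ ∃ v, (edgesAt h v).image ε = A := by
  simp [mdl]

theorem unionC_mdl (h : E → V × V) (ε : E → ℕ) : unionC (mdl h ε) = univ.image ε := by
  ext a
  simp only [mem_unionC, mem_mdl]
  constructor
  · rintro ⟨_, ⟨v, rfl⟩, ha⟩
    exact Finset.image_subset_image (Finset.subset_univ _) ha
  · intro ha
    obtain ⟨e, -, rfl⟩ := Finset.mem_image.1 ha
    exact ⟨_, ⟨(h e).1, rfl⟩, Finset.mem_image_of_mem _ (mem_edgesAt.2 (Or.inl rfl))⟩

theorem card_mdl (h : E → V × V) (ε : E → ℕ) : Multiset.card (mdl h ε) = Fintype.card V := by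
  simp [mdl]

/-- The names of the edges are irrelevant up to isomorphism. -/
theorem mdl_iso (h : E → V × V) {ε ε' : E → ℕ} (hε : ε.Injective) (hε' : ε'.Injective) :
    Isomorphic (mdl h ε) (mdl h ε') := by
  rcases isEmpty_or_nonempty E with hE | hE
  · rw [show ε = ε' from funext fun e => (hE.false e).elim]
    exact Isomorphic.refl _
  · refine isomorphic_of_injOn (ε' ∘ Function.invFun ε) ?_ ?_
    · rw [unionC_mdl]
      rintro a ha b hb hab
      obtain ⟨e, -, rfl⟩ := Finset.mem_image.1 (Finset.mem_coe.1 ha)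
      obtain ⟨f, -, rfl⟩ := Finset.mem_image.1 (Finset.mem_coe.1 hb)
      simp only [Function.comp, Function.leftInverse_invFun hε _] at hab
      rw [hε' hab]
    · simp only [mdl, Multiset.map_map]
      refine Multiset.map_congr rfl fun v _ => ?_
      simp only [Function.comp, Finset.image_image]
      refine Finset.image_congr fun e _ => ?_
      simp [Function.leftInverse_invFun hε _]

/-- Relabelling the vertices and the edges of a graph only renames the edges in the dual
set-collection. -/
theorem mdl_relabel (h : E → V × V) (ε : E → ℕ) (σ : Equiv.Perm V) (τ : Equiv.Perm E) :
    mdl (fun e => (σ (h (τ.symm e)).1, σ (h (τ.symm e)).2)) ε = mdl h (ε ∘ τ) := by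
  classical
  have key : ∀ v, (edgesAt (fun e => (σ (h (τ.symm e)).1, σ (h (τ.symm e)).2)) (σ v)).image ε =
      (edgesAt h v).image (ε ∘ τ) := by
    intro v
    ext a
    simp only [Finset.mem_image, mem_edgesAt, Inc, Function.comp, σ.injective.eq_iff]
    constructor
    · rintro ⟨e, he, rfl⟩
      exact ⟨τ.symm e, he, by simp⟩
    · rintro ⟨e, he, rfl⟩
      exact ⟨τ e, by simpa using he, rfl⟩
  unfold mdl
  conv_lhs => rw [← Multiset.map_univ_val_equiv σ, Multiset.map_map]
  exact Multiset.map_congr rfl fun v _ => key v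

/-- Two functions on a finite type with the same multiset of values differ by a permutation. -/
theorem exists_perm_of_map_eq {β : Type} {f g : V → β}
    (hfg : (univ : Finset V).val.map f = (univ : Finset V).val.map g) :
    ∃ σ : Equiv.Perm V, ∀ v, f v = g (σ v) := by
  classical
  have hc : ∀ b, Nonempty ({v // f v = b} ≃ {v // g v = b}) := by
    intro b
    refine ⟨Fintype.equivOfCardEq ?_⟩
    rw [Fintype.card_subtype, Fintype.card_subtype]
    have := congrArg (Multiset.count b) hfg
    rw [Multiset.count_map, Multiset.count_map] at this
    simpa [Finset.card_def, Finset.filter_val, eq_comm] using this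
  let F := fun b => (hc b).some
  refine ⟨(Equiv.sigmaFiberEquiv f).symm.trans
    ((Equiv.sigmaCongrRight F).trans (Equiv.sigmaFiberEquiv g)), fun v => ?_⟩
  exact ((F (f v)) ⟨v, rfl⟩).2.symm

/-- An isomorphism of dual set-collections induces a map of graphs, bijective on vertices. -/
theorem exists_graph_iso {h h' : E → V × V} {ε : E → ℕ} (hε : ε.Injective)
    (H : Isomorphic (mdl h ε) (mdl h' ε)) :
    ∃ (σ : Equiv.Perm V) (τ : E → E), ∀ v e, Inc h v e → Inc h' (σ v) (τ e) := by
  classical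
  obtain ⟨φ, hφ, hD⟩ := H
  unfold mdl at hD
  rw [Multiset.map_map] at hD
  obtain ⟨σ, hσ⟩ := exists_perm_of_map_eq hD
  have hτ : ∀ e, ∃ f, ε f = φ (ε e) := by
    intro e
    have := hφ.mapsTo (x := ε e) (by rw [unionC_mdl]; simp)
    rw [unionC_mdl] at this
    obtain ⟨f, -, hf⟩ := Finset.mem_image.1 (Finset.mem_coe.1 this)
    exact ⟨f, hf⟩
  choose τ hτ using hτ
  refine ⟨σ, τ, fun v e he => ?_⟩
  have h1 : φ (ε e) ∈ (edgesAt h' (σ v)).image ε := by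
    rw [← hσ v]
    exact Finset.mem_image_of_mem _ (Finset.mem_image_of_mem _ (mem_edgesAt.2 he))
  obtain ⟨f, hf, hfe⟩ := Finset.mem_image.1 h1
  rw [← hτ e] at hfe
  rw [← hε hfe]
  exact mem_edgesAt.1 hf

/-- If every vertex has degree at most `l`, the edges at each vertex can be numbered by
`Fin l`. -/
theorem exists_slot {l : ℕ} (hl : 0 < l) (h : E → V × V) :
    ∃ s : V → E → Fin l, (∀ v, (edgesAt h v).card ≤ l) →
      ∀ v e f, Inc h v e → Inc h v f → s v e = s v f → e = f := by
  classical
  have : Nonempty (Fin l) := ⟨⟨0, hl⟩⟩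
  by_cases H : ∀ v, (edgesAt h v).card ≤ l
  · have : ∀ v, ∃ s : E → Fin l, Set.InjOn s ↑(edgesAt h v) := by
      intro v
      refine ⟨fun e => if he : e ∈ edgesAt h v then
        Fin.castLE (H v) ((edgesAt h v).equivFin ⟨e, he⟩) else ⟨0, hl⟩, fun e he f hf hef => ?_⟩
      simp only [Finset.mem_coe.1 he, Finset.mem_coe.1 hf, dite_true] at hef
      simpa using (edgesAt h v).equivFin.injective (Fin.castLE_injective _ hef)
    choose s hs using this
    exact ⟨s, fun _ v e f he hf hh => hs v (mem_edgesAt.2 he) (mem_edgesAt.2 hf) hh⟩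
  · exact ⟨fun _ _ => ⟨0, hl⟩, fun h => (H h).elim⟩

/-- Two vertices are joined by an edge, or equal and not isolated. -/
def Adj (h : E → V × V) (v w : V) : Prop := ∃ e, Inc h v e ∧ Inc h w e

theorem isDoubleCover_mdl {h : E → V × V} (hne : ∀ e, (h e).1 ≠ (h e).2) {ε : E → ℕ}
    (hε : ε.Injective) : IsDoubleCover (mdl h ε) := by
  classical
  intro a ha
  rw [unionC_mdl] at ha
  obtain ⟨e, -, rfl⟩ := Finset.mem_image.1 ha
  unfold mdl
  rw [Multiset.countP_map, ← Finset.filter_val, ← Finset.card_def]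
  rw [show (univ.filter fun v => ε e ∈ (edgesAt h v).image ε) = {(h e).1, (h e).2} by
    ext v
    simp [hε.eq_iff, mem_edgesAt, Inc]]
  exact Finset.card_pair (hne e)

end model
end

/-! ### Counting classes of connected graphs -/

section
open Finset

/-- The set of collections `P` is covered by at most `x` isomorphism classes. -/
def Bnd (P : Set (Multiset (Finset ℕ))) (x : ℝ) : Prop :=
  ∃ R : Finset (Multiset (Finset ℕ)), (R.card : ℝ) ≤ x ∧ ∀ C ∈ P, ∃ D ∈ R, Isomorphic C D

theorem Bnd.mono {P Q : Set (Multiset (Finset ℕ))} {x y : ℝ} (h : Bnd P x) (hQ : Q ⊆ P)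
    (hxy : x ≤ y) : Bnd Q y := by
  obtain ⟨R, hR, hP⟩ := h
  exact ⟨R, hR.trans hxy, fun C hC => hP C (hQ hC)⟩

/-- A bound on the size of systems of pairwise non-isomorphic members of `P` bounds the number of
classes: a system of maximal size represents every class. -/
theorem Bnd.of_forall {P : Set (Multiset (Finset ℕ))} {x : ℝ}
    (h : ∀ R : Finset (Multiset (Finset ℕ)), (∀ C ∈ R, C ∈ P) →
      (∀ C ∈ R, ∀ D ∈ R, Isomorphic C D → C = D) → (R.card : ℝ) ≤ x) : Bnd P x := by
  classical
  by_contra hcon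
  have key : ∀ n : ℕ, ∃ R : Finset (Multiset (Finset ℕ)), (∀ C ∈ R, C ∈ P) ∧
      (∀ C ∈ R, ∀ D ∈ R, Isomorphic C D → C = D) ∧ R.card = n := by
    intro n
    induction n with
    | zero => exact ⟨∅, by simp, by simp, rfl⟩
    | succ n ih =>
      obtain ⟨R, h1, h2, h3⟩ := ih
      have : ¬ ∀ C ∈ P, ∃ D ∈ R, Isomorphic C D := fun hh => hcon ⟨R, h R h1 h2, hh⟩
      push Not at this
      obtain ⟨C, hC, hCR⟩ := this
      have hn : C ∉ R := fun hh => hCR C hh (Isomorphic.refl C)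
      refine ⟨insert C R, ?_, ?_, by rw [Finset.card_insert_of_notMem hn, h3]⟩
      · intro D hD
        rcases Finset.mem_insert.1 hD with rfl | hD
        · exact hC
        · exact h1 D hD
      · intro D hD F hF hDF
        rcases Finset.mem_insert.1 hD with hD' | hD' <;>
          rcases Finset.mem_insert.1 hF with hF' | hF'
        · rw [hD', hF']
        · exact (hCR F hF' (hD' ▸ hDF)).elim
        · exact (hCR D hD' (hF' ▸ hDF.symm)).elim
        · exact h2 D hD' F hF' hDF
  obtain ⟨n, hn⟩ := exists_nat_gt x
  obtain ⟨R, h1, h2, h3⟩ := key n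
  have := h R h1 h2
  rw [h3] at this
  linarith

/-- Every double-covering is dual to a loopless graph. -/
theorem exists_mdl {C : Multiset (Finset ℕ)} (hC : IsDoubleCover C) {p : ℕ}
    (hp : Multiset.card C = p) : ∃ (h : Fin (unionC C).card → Fin p × Fin p)
      (ε : Fin (unionC C).card → ℕ), ε.Injective ∧ (∀ e, (h e).1 ≠ (h e).2) ∧ C = mdl h ε := by
  classical
  obtain ⟨A, hA⟩ : ∃ A : Fin p → Finset ℕ, C = (univ : Finset (Fin p)).val.map A := by
    obtain ⟨L, rfl⟩ : ∃ L : List (Finset ℕ), C = L := ⟨C.toList, (Multiset.coe_toList C).symm⟩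
    subst hp
    refine ⟨L.get, ?_⟩
    exact ((Fin.univ_val_map L.get).trans (congrArg _ (List.ofFn_get L))).symm
  set ε := (unionC C).orderEmbOfFin rfl with hε
  have h2 : ∀ e, ∃ x : Fin p × Fin p, x.1 ≠ x.2 ∧ ∀ v, ε e ∈ A v ↔ v = x.1 ∨ v = x.2 := by
    intro e
    have := hC (ε e) (Finset.orderEmbOfFin_mem _ _ _)
    rw [show Multiset.countP (fun B => ε e ∈ B) C = _ from congrArg _ hA,
      Multiset.countP_map, ← Finset.filter_val, ← Finset.card_def, Finset.card_eq_two] at this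
    obtain ⟨x, y, hxy, hf⟩ := this
    refine ⟨(x, y), hxy, fun v => ?_⟩
    have := Finset.ext_iff.1 hf v
    simpa using this
  choose h hne hmem using h2
  refine ⟨h, ε, ε.injective, hne, ?_⟩
  conv_lhs => rw [hA]
  refine Multiset.map_congr rfl fun v _ => ?_
  ext a
  simp only [Finset.mem_image, mem_edgesAt, Inc, ← hmem]
  constructor
  · intro ha
    have : a ∈ Set.range ε := by
      rw [hε, Finset.range_orderEmbOfFin]
      refine Finset.mem_coe.2 (mem_unionC.2 ⟨A v, ?_, ha⟩)
      rw [hA]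
      simp
    obtain ⟨e, rfl⟩ := this
    exact ⟨e, ha, rfl⟩
  · rintro ⟨e, he, rfl⟩
    exact he

theorem sum_card_edgesAt {V E : Type} [Fintype V] [Fintype E] {h : E → V × V}
    (hne : ∀ e, (h e).1 ≠ (h e).2) : ∑ v, (edgesAt h v).card = 2 * Fintype.card E := by
  classical
  have := Finset.sum_card_bipartiteAbove_eq_sum_card_bipartiteBelow (s := (univ : Finset V))
    (t := (univ : Finset E)) (fun v e => Inc h v e)
  have h1 : ∀ e, (Finset.bipartiteBelow (fun v e => Inc h v e) (univ : Finset V) e).card = 2 := by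
    intro e
    rw [← Finset.card_pair (hne e)]
    congr 1
    ext v
    rw [Finset.mem_bipartiteBelow]
    simp [Inc]
  simp only [h1, Finset.sum_const, Finset.card_univ, smul_eq_mul] at this
  rw [mul_comm, ← this]
  refine Finset.sum_congr rfl fun v _ => ?_
  congr 1

/-- Connectedness of the set-collection passes to the dual graph. -/
theorem connected_graph {V E : Type} [Fintype V] [Fintype E] {h : E → V × V} {ε : E → ℕ}
    (hε : ε.Injective) (hne : ∀ v, (edgesAt h v).Nonempty) (hC : ConnectedColl (mdl h ε))
    (v w : V) : Relation.ReflTransGen (Adj h) v w := by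
  classical
  have adj : ∀ x y, ((edgesAt h x).image ε ∩ (edgesAt h y).image ε).Nonempty → Adj h x y := by
    rintro x y ⟨a, ha⟩
    obtain ⟨ha, hb⟩ := Finset.mem_inter.1 ha
    obtain ⟨e, he, rfl⟩ := Finset.mem_image.1 ha
    obtain ⟨f, hf, hfe⟩ := Finset.mem_image.1 hb
    rw [hε hfe] at hf
    exact ⟨e, mem_edgesAt.1 he, mem_edgesAt.1 hf⟩
  have H := hC _ (mem_mdl.2 ⟨v, rfl⟩) _ (mem_mdl.2 ⟨w, rfl⟩)
  have : ∀ X, Relation.ReflTransGen (fun X Y => X ∈ mdl h ε ∧ Y ∈ mdl h ε ∧ (X ∩ Y).Nonempty)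
      ((edgesAt h v).image ε) X → ∀ x, (edgesAt h x).image ε = X →
        Relation.ReflTransGen (Adj h) v x := by
    intro X hX
    induction hX with
    | refl =>
      intro x hx
      refine Relation.ReflTransGen.single (adj _ _ ?_)
      rw [hx, Finset.inter_self]
      exact (hne v).image _
    | tail _ hst ih =>
      rintro y rfl
      obtain ⟨hX, -, hXY⟩ := hst
      obtain ⟨x, rfl⟩ := mem_mdl.1 hX
      exact (ih x rfl).tail (adj _ _ hXY)
  exact this _ H w rfl

/-- Two relabellings of a connected graph that yield the same graph coincide as soon as they agree
at one vertex and use the same edge numbers around each vertex. -/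
theorem relabel_unique {V E : Type} [Fintype V] [Fintype E] {l : ℕ} {h : E → V × V}
    (hcon : ∀ v w, Relation.ReflTransGen (Adj h) v w)
    {g : E → V × V} {s : V → E → Fin l}
    (hs : ∀ v e f, Inc g v e → Inc g v f → s v e = s v f → e = f)
    {σ σ' : Equiv.Perm V} {τ τ' : Equiv.Perm E}
    (h1 : ∀ e, g (τ e) = (σ (h e).1, σ (h e).2)) (h2 : ∀ e, g (τ' e) = (σ' (h e).1, σ' (h e).2))
    {r : V} (hr : σ r = σ' r) (hs1 : ∀ e, s (σ (h e).1) (τ e) = s (σ' (h e).1) (τ' e))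
    (hs2 : ∀ e, s (σ (h e).2) (τ e) = s (σ' (h e).2) (τ' e)) : σ = σ' ∧ τ = τ' := by
  have hedge : ∀ v e, σ v = σ' v → Inc h v e → τ e = τ' e := by
    rintro v e hv (rfl | rfl)
    · refine hs (σ (h e).1) _ _ (Or.inl ?_) (Or.inl ?_) ?_
      · rw [h1]
      · rw [h2, hv]
      · rw [hs1, hv]
    · refine hs (σ (h e).2) _ _ (Or.inr ?_) (Or.inr ?_) ?_
      · rw [h1]
      · rw [h2, hv]
      · rw [hs2, hv]
  have hv : ∀ v, σ v = σ' v := by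
    intro v
    induction hcon r v with
    | refl => exact hr
    | @tail x y _ hxy ih =>
      obtain ⟨e, hx, hy⟩ := hxy
      have he := hedge x e ih hx
      have := h1 e
      rw [he, h2 e, Prod.mk.injEq] at this
      rcases hy with rfl | rfl
      · exact this.1.symm
      · exact this.2.symm
  refine ⟨Equiv.ext hv, Equiv.ext fun e => hedge _ e (hv (h e).1) (Or.inl rfl)⟩

/-- Orbit counting for connected graphs: relabelling the vertices and edges of the given
representatives yields distinct graphs up to a factor bounding the automorphism groups. -/
theorem card_mul_le {V E : Type} [Fintype V] [Fintype E] [DecidableEq V] [DecidableEq E] (r : V)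
    {l : ℕ} (hl : 0 < l) (R : Finset (Multiset (Finset ℕ)))
    (hR : ∀ C ∈ R, ∃ (h : E → V × V) (ε : E → ℕ), ε.Injective ∧ C = mdl h ε ∧
      (∀ v, (edgesAt h v).card ≤ l) ∧ ∀ v w, Relation.ReflTransGen (Adj h) v w)
    (hiso : ∀ C ∈ R, ∀ D ∈ R, Isomorphic C D → C = D) :
    R.card * ((Fintype.card V).factorial * (Fintype.card E).factorial) ≤
      (Fintype.card V * Fintype.card V) ^ Fintype.card E *
        (Fintype.card V * (l ^ Fintype.card E * l ^ Fintype.card E)) := by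
  classical
  choose h ε hε hC hdeg hcon using fun C : R => hR C.1 C.2
  choose s hs using fun g : E → V × V => exists_slot hl g
  let rel : R → Equiv.Perm V → Equiv.Perm E → E → V × V :=
    fun C σ τ e => (σ (h C (τ.symm e)).1, σ (h C (τ.symm e)).2)
  -- A relabelled representative, together with the data that pin down the relabelling.
  let F : R × Equiv.Perm V × Equiv.Perm E → (E → V × V) × V × (E → Fin l) × (E → Fin l) :=
    fun x => (rel x.1 x.2.1 x.2.2, x.2.1 r,
      fun e => s (rel x.1 x.2.1 x.2.2) (x.2.1 (h x.1 e).1) (x.2.2 e),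
      fun e => s (rel x.1 x.2.1 x.2.2) (x.2.1 (h x.1 e).2) (x.2.2 e))
  have hF : F.Injective := by
    rintro ⟨C, σ, τ⟩ ⟨D, σ', τ'⟩ hFF
    simp only [F, Prod.mk.injEq] at hFF
    obtain ⟨hg, hr, hs1, hs2⟩ := hFF
    have hCD : C = D := by
      refine Subtype.ext (hiso _ C.2 _ D.2 ?_)
      have e1 := mdl_relabel (h C) (ε C) σ τ
      have e2 := mdl_relabel (h D) (ε D) σ' τ'
      have i1 : Isomorphic C.1 (mdl (rel C σ τ) (ε C)) := by
        conv_lhs => rw [hC C]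
        rw [e1]
        exact mdl_iso _ (hε C) ((hε C).comp τ.injective)
      have i2 : Isomorphic D.1 (mdl (rel D σ' τ') (ε D)) := by
        conv_lhs => rw [hC D]
        rw [e2]
        exact mdl_iso _ (hε D) ((hε D).comp τ'.injective)
      refine i1.trans (Isomorphic.trans ?_ i2.symm)
      rw [hg]
      exact mdl_iso _ (hε C) (hε D)
    subst hCD
    have hd : ∀ v, (edgesAt (rel C σ τ) v).card ≤ l := by
      intro v
      refine le_trans ?_ (hdeg C (σ.symm v))
      refine Finset.card_le_card_of_injOn τ.symm ?_ τ.symm.injective.injOn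
      intro e he
      have he := mem_edgesAt.1 (Finset.mem_coe.1 he)
      refine Finset.mem_coe.2 (mem_edgesAt.2 ?_)
      simpa [Inc, rel, Equiv.symm_apply_eq] using he
    have := relabel_unique (hcon C) (g := rel C σ τ) (s := s (rel C σ τ)) (hs _ hd)
      (σ := σ) (σ' := σ') (τ := τ) (τ' := τ') (r := r) (by simp [rel])
      (by intro e; rw [hg]; simp [rel]) hr
      (fun e => by have := congrFun hs1 e; rw [← hg] at this; exact this)
      (fun e => by have := congrFun hs2 e; rw [← hg] at this; exact this)
    rw [this.1, this.2]
  have := Fintype.card_le_of_injective F hF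
  simpa [Fintype.card_perm] using this

end

/-! ### The upper bound -/

section
open Finset

/-- Bounds add up over a finite cover of `P` by the sets `Q i`. -/
theorem Bnd.biUnion {ι : Type} (I : Finset ι) {P : Set (Multiset (Finset ℕ))}
    (Q : ι → Set (Multiset (Finset ℕ))) (x : ι → ℝ) (hQ : ∀ i ∈ I, Bnd (Q i) (x i))
    (hP : ∀ C ∈ P, ∃ i ∈ I, C ∈ Q i) : Bnd P (∑ i ∈ I, x i) := by
  classical
  have : ∀ i, ∃ R : Finset (Multiset (Finset ℕ)), i ∈ I →
      (R.card : ℝ) ≤ x i ∧ ∀ C ∈ Q i, ∃ D ∈ R, Isomorphic C D := by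
    intro i
    by_cases hi : i ∈ I
    · obtain ⟨R, hR⟩ := hQ i hi
      exact ⟨R, fun _ => hR⟩
    · exact ⟨∅, fun h => (hi h).elim⟩
  choose R hR using this
  refine ⟨I.biUnion R, ?_, fun C hC => ?_⟩
  · calc ((I.biUnion R).card : ℝ) ≤ ((∑ i ∈ I, (R i).card : ℕ) : ℝ) := by
          exact_mod_cast Finset.card_biUnion_le
      _ = ∑ i ∈ I, ((R i).card : ℝ) := by push_cast; rfl
      _ ≤ _ := Finset.sum_le_sum fun i hi => (hR i hi).1
  · obtain ⟨i, hi, hCi⟩ := hP C hC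
    obtain ⟨D, hD, hiso⟩ := (hR i hi).2 C hCi
    exact ⟨D, Finset.mem_biUnion.2 ⟨i, hi, hD⟩, hiso⟩

/-- A disjoint union of two set-collections: even copies of the first, odd copies of the second. -/
def join (D F : Multiset (Finset ℕ)) : Multiset (Finset ℕ) :=
  D.map (Finset.image fun a => 2 * a) + F.map (Finset.image fun a => 2 * a + 1)

theorem unionC_add (D F : Multiset (Finset ℕ)) : unionC (D + F) = unionC D ∪ unionC F := by
  ext a
  simp only [mem_unionC, Multiset.mem_add, Finset.mem_union]
  constructor
  · rintro ⟨A, hA | hA, ha⟩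
    · exact Or.inl ⟨A, hA, ha⟩
    · exact Or.inr ⟨A, hA, ha⟩
  · rintro (⟨A, hA, ha⟩ | ⟨A, hA, ha⟩)
    · exact ⟨A, Or.inl hA, ha⟩
    · exact ⟨A, Or.inr hA, ha⟩

/-- The class of a disjoint union is determined by the classes of the two parts. -/
theorem iso_join {D F D' F' : Multiset (Finset ℕ)} (hdis : Disjoint (unionC D) (unionC F))
    (hD : Isomorphic D D') (hF : Isomorphic F F') : Isomorphic (D + F) (join D' F') := by
  classical
  obtain ⟨φ, hφ, rfl⟩ := hD
  obtain ⟨ψ, hψ, rfl⟩ := hF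
  have hF : ∀ a ∈ unionC F, a ∉ unionC D := fun a ha hb => Finset.disjoint_left.1 hdis hb ha
  refine isomorphic_of_injOn (fun a => if a ∈ unionC D then 2 * φ a else 2 * ψ a + 1) ?_ ?_
  · intro a ha b hb hab
    rw [unionC_add, Finset.mem_coe, Finset.mem_union] at ha hb
    simp only at hab
    rcases ha with ha | ha <;> rcases hb with hb | hb
    · rw [if_pos ha, if_pos hb] at hab
      exact hφ.injOn ha hb (by omega)
    · rw [if_pos ha, if_neg (hF b hb)] at hab
      omega
    · rw [if_neg (hF a ha), if_pos hb] at hab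
      omega
    · rw [if_neg (hF a ha), if_neg (hF b hb)] at hab
      exact hψ.injOn ha hb (by omega)
  · unfold join
    rw [Multiset.map_add, Multiset.map_map, Multiset.map_map]
    congr 1
    · refine Multiset.map_congr rfl fun A hA => ?_
      simp only [Function.comp, Finset.image_image]
      refine Finset.image_congr fun a ha => ?_
      simp only [if_pos (mem_unionC.2 ⟨A, hA, ha⟩), Function.comp]
    · refine Multiset.map_congr rfl fun A hA => ?_
      simp only [Function.comp, Finset.image_image]
      refine Finset.image_congr fun a ha => ?_
      simp only [if_neg (hF a (mem_unionC.2 ⟨A, hA, ha⟩)), Function.comp]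

theorem Bnd.join {P P' Q : Set (Multiset (Finset ℕ))} {x y : ℝ} (hx : Bnd P x) (hy : Bnd P' y)
    (hQ : ∀ C ∈ Q, ∃ D ∈ P, ∃ F ∈ P', C = D + F ∧ Disjoint (unionC D) (unionC F)) :
    Bnd Q (x * y) := by
  classical
  obtain ⟨R, hR, hP⟩ := hx
  obtain ⟨R', hR', hP'⟩ := hy
  refine ⟨(R ×ˢ R').image fun z => _root_.join z.1 z.2, ?_, fun C hC => ?_⟩
  · refine le_trans (Nat.cast_le.2 Finset.card_image_le) ?_
    rw [Finset.card_product, Nat.cast_mul]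
    exact mul_le_mul hR hR' (Nat.cast_nonneg _) ((Nat.cast_nonneg _).trans hR)
  · obtain ⟨D, hD, F, hF, rfl, hdis⟩ := hQ C hC
    obtain ⟨D', hD', hi⟩ := hP D hD
    obtain ⟨F', hF', hi'⟩ := hP' F hF
    exact ⟨_, Finset.mem_image.2 ⟨(D', F'), Finset.mem_product.2 ⟨hD', hF'⟩, rfl⟩,
      iso_join hdis hi hi'⟩

/-- The double-coverings counted by `muStarFull l p`. -/
def Pall (l p : ℕ) : Set (Multiset (Finset ℕ)) :=
  {C | Multiset.card C = p ∧ IsDoubleCover C ∧ ∀ A ∈ C, 1 ≤ A.card ∧ A.card ≤ l}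

/-- The connected members of `Pall l p`. -/
def Pconn (l p : ℕ) : Set (Multiset (Finset ℕ)) :=
  {C | C ∈ Pall l p ∧ ConnectedColl C}

theorem isDoubleCover_left {D F : Multiset (Finset ℕ)} (hdis : Disjoint (unionC D) (unionC F))
    (h : IsDoubleCover (D + F)) : IsDoubleCover D := by
  intro a ha
  have h1 := h a (by rw [unionC_add]; exact Finset.mem_union_left _ ha)
  rw [Multiset.countP_add] at h1
  have h2 : Multiset.countP (fun A => a ∈ A) F = 0 := by
    rw [Multiset.countP_eq_zero]
    intro A hA haA
    exact Finset.disjoint_left.1 hdis ha (mem_unionC.2 ⟨A, hA, haA⟩)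
  omega

/-- Splitting off the connected component of a member set. -/
theorem exists_split {l p : ℕ} (hp : 1 ≤ p) {C : Multiset (Finset ℕ)} (hC : C ∈ Pall l p) :
    ∃ q ∈ Finset.Icc 1 p, ∃ D ∈ Pconn l q, ∃ F ∈ Pall l (p - q),
      C = D + F ∧ Disjoint (unionC D) (unionC F) := by
  classical
  obtain ⟨hcard, hdc, hA⟩ := hC
  obtain ⟨A, hAC⟩ := Multiset.card_pos_iff_exists_mem.1 (by omega : 0 < Multiset.card C)
  set rel := fun X Y : Finset ℕ => X ∈ C ∧ Y ∈ C ∧ (X ∩ Y).Nonempty with hrel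
  set D := C.filter (Relation.ReflTransGen rel A) with hD
  set F := C.filter (fun X => ¬ Relation.ReflTransGen rel A X) with hF
  have hCDF : D + F = C := Multiset.filter_add_not _ _
  have hDC : ∀ X ∈ D, X ∈ C := fun X hX => Multiset.mem_of_mem_filter hX
  have hFC : ∀ X ∈ F, X ∈ C := fun X hX => Multiset.mem_of_mem_filter hX
  have hdis : Disjoint (unionC D) (unionC F) := by
    rw [Finset.disjoint_left]
    intro a ha hb
    obtain ⟨X, hX, haX⟩ := mem_unionC.1 ha
    obtain ⟨Y, hY, haY⟩ := mem_unionC.1 hb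
    exact (Multiset.mem_filter.1 hY).2 ((Multiset.mem_filter.1 hX).2.tail
      ⟨hDC X hX, hFC Y hY, a, Finset.mem_inter.2 ⟨haX, haY⟩⟩)
  have hAD : A ∈ D := Multiset.mem_filter.2 ⟨hAC, Relation.ReflTransGen.refl⟩
  have hcDF : Multiset.card D + Multiset.card F = p := by
    rw [← Multiset.card_add, hCDF, hcard]
  have hDpos : 0 < Multiset.card D := Multiset.card_pos_iff_exists_mem.2 ⟨A, hAD⟩
  refine ⟨Multiset.card D, Finset.mem_Icc.2 ⟨hDpos, by omega⟩, D, ⟨⟨rfl, ?_, ?_⟩, ?_⟩, F,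
    ⟨by omega, ?_, ?_⟩, hCDF.symm, hdis⟩
  · exact isDoubleCover_left hdis (hCDF ▸ hdc)
  · exact fun X hX => hA X (hDC X hX)
  · have key : ∀ X, Relation.ReflTransGen rel A X →
        Relation.ReflTransGen (fun X Y => X ∈ D ∧ Y ∈ D ∧ (X ∩ Y).Nonempty) A X := by
      intro X hX
      induction hX with
      | refl => exact Relation.ReflTransGen.refl
      | tail hst hr ih =>
        exact ih.tail ⟨Multiset.mem_filter.2 ⟨hr.1, hst⟩,
          Multiset.mem_filter.2 ⟨hr.2.1, hst.tail hr⟩, hr.2.2⟩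
    have hsymm : Std.Symm
        (fun X Y : Finset ℕ => X ∈ D ∧ Y ∈ D ∧ (X ∩ Y).Nonempty) :=
      ⟨fun X Y h => ⟨h.2.1, h.1, by rw [Finset.inter_comm]; exact h.2.2⟩⟩
    intro X hX Y hY
    exact (Relation.ReflTransGen.stdSymm.symm _ _ (key X (Multiset.mem_filter.1 hX).2)).trans
      (key Y (Multiset.mem_filter.1 hY).2)
  · exact isDoubleCover_left hdis.symm (by rw [add_comm, hCDF]; exact hdc)
  · exact fun X hX => hA X (hFC X hX)

theorem Bnd.zero (l : ℕ) : Bnd (Pall l 0) 1 := by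
  refine ⟨{0}, by simp, fun C hC => ⟨0, by simp, ?_⟩⟩
  rw [Multiset.card_eq_zero.1 hC.1]
  exact Isomorphic.refl _

/-- Splitting off components turns a bound for connected coverings into one for all coverings. -/
theorem bnd_all {l : ℕ} {β : ℝ} (hβ : 0 ≤ β) (g : ℕ → ℝ) (hg0 : ∀ n, 0 ≤ g n) (hg : Monotone g)
    (hc : ∀ q, 1 ≤ q → Bnd (Pconn l q) (β ^ q * g q ^ q)) (p : ℕ) :
    Bnd (Pall l p) ((2 * β) ^ p * g p ^ p) := by
  induction p using Nat.strong_induction_on with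
  | _ p ih =>
    rcases Nat.eq_zero_or_pos p with rfl | hp
    · simpa using Bnd.zero l
    have h1 := Bnd.biUnion (Finset.Icc 1 p) (P := Pall l p)
      (fun q => {C | ∃ D ∈ Pconn l q, ∃ F ∈ Pall l (p - q),
        C = D + F ∧ Disjoint (unionC D) (unionC F)})
      (fun q => (β ^ q * g q ^ q) * ((2 * β) ^ (p - q) * g (p - q) ^ (p - q)))
      (fun q hq => by
        have hq := Finset.mem_Icc.1 hq
        exact Bnd.join (hc q hq.1) (ih (p - q) (by omega)) fun C hC => hC)
      (fun C hC => exists_split hp hC)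
    refine h1.mono subset_rfl ?_
    have h2 : ∀ q ∈ Finset.Icc 1 p,
        (β ^ q * g q ^ q) * ((2 * β) ^ (p - q) * g (p - q) ^ (p - q)) ≤
          (β ^ p * g p ^ p) * 2 ^ (p - q) := by
      intro q hq
      have hq := Finset.mem_Icc.1 hq
      obtain ⟨k, rfl⟩ : ∃ k, p = q + k := ⟨p - q, by omega⟩
      rw [Nat.add_sub_cancel_left]
      have e1 : g q ^ q ≤ g (q + k) ^ q := pow_le_pow_left₀ (hg0 _) (hg (by omega)) _
      have e2 : g k ^ k ≤ g (q + k) ^ k := pow_le_pow_left₀ (hg0 _) (hg (by omega)) _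
      calc (β ^ q * g q ^ q) * ((2 * β) ^ k * g k ^ k)
          = (β ^ q * (2 * β) ^ k) * (g q ^ q * g k ^ k) := by ring
        _ ≤ (β ^ q * (2 * β) ^ k) * (g (q + k) ^ q * g (q + k) ^ k) := by
            refine mul_le_mul_of_nonneg_left ?_ (by positivity)
            exact mul_le_mul e1 e2 (pow_nonneg (hg0 _) _) (pow_nonneg (hg0 _) _)
        _ = _ := by rw [mul_pow, pow_add, pow_add]; ring
    refine (Finset.sum_le_sum h2).trans ?_
    rw [← Finset.mul_sum]
    -- The geometric sum is what forces the factor `2 ^ p`.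
    have h3 : ∀ n : ℕ, ∑ q ∈ Finset.Icc 1 n, (2 : ℝ) ^ (n - q) ≤ 2 ^ n := by
      intro n
      have : ∑ q ∈ Finset.Icc 1 n, (2 : ℝ) ^ (n - q) = 2 ^ n - 1 := by
        induction n with
        | zero => simp
        | succ n ih =>
          have : ∀ q ∈ Finset.Icc 1 n, (2 : ℝ) ^ (n + 1 - q) = 2 * 2 ^ (n - q) := by
            intro q hq
            rw [Nat.succ_sub (Finset.mem_Icc.1 hq).2, pow_succ, mul_comm]
          rw [Finset.sum_Icc_succ_top (by omega), Finset.sum_congr rfl this, ← Finset.mul_sum, ih]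
          simp only [Nat.sub_self, pow_succ, pow_zero]
          ring
      linarith
    calc β ^ p * g p ^ p * ∑ q ∈ Finset.Icc 1 p, (2 : ℝ) ^ (p - q)
        ≤ β ^ p * g p ^ p * 2 ^ p :=
          mul_le_mul_of_nonneg_left (h3 p) (mul_nonneg (pow_nonneg hβ _) (pow_nonneg (hg0 _) _))
      _ = _ := by rw [mul_pow]; ring

theorem pow_le_exp_mul_factorial (p n : ℕ) : (p : ℝ) ^ n ≤ Real.exp p * n.factorial := by
  have := Real.pow_div_factorial_le_exp (p : ℝ) (Nat.cast_nonneg p) n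
  rwa [div_le_iff₀ (by positivity)] at this

/-- The growth rate per set, `n ^ (l / 2 - 1)`. -/
noncomputable def gr (l n : ℕ) : ℝ := (n : ℝ) ^ ((l : ℝ) / 2 - 1)

theorem gr_nonneg (l n : ℕ) : 0 ≤ gr l n := Real.rpow_nonneg (Nat.cast_nonneg _) _

theorem gr_mono {l : ℕ} (hl : 2 ≤ l) : Monotone (gr l) := by
  intro m n h
  have : (2 : ℝ) ≤ l := by exact_mod_cast hl
  exact Real.rpow_le_rpow (Nat.cast_nonneg _) (by exact_mod_cast h) (by linarith)

theorem gr_pow (l p : ℕ) : gr l p ^ p = (p : ℝ) ^ ((p : ℝ) * ((l : ℝ) / 2 - 1)) := by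
  unfold gr
  rw [← Real.rpow_natCast, ← Real.rpow_mul (Nat.cast_nonneg _), mul_comm]

/-- Since `p ^ (p * l / 2)` is `gr l p ^ p * p ^ p`, this is the power of `p` allowed by the number
of edges. -/
theorem pow_le_gr {l p e : ℕ} (hp : 1 ≤ p) (he : 2 * e ≤ p * l) :
    (p : ℝ) ^ e ≤ gr l p ^ p * (p : ℝ) ^ p := by
  have hp' : (1 : ℝ) ≤ p := by exact_mod_cast hp
  rw [gr_pow, ← Real.rpow_natCast (p : ℝ) e, ← Real.rpow_natCast (p : ℝ) p,
    ← Real.rpow_add (by linarith)]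
  refine Real.rpow_le_rpow_of_exponent_le hp' ?_
  have : (2 * e : ℝ) ≤ p * l := by exact_mod_cast he
  linarith

/-- The base of the exponential factor for connected coverings. -/
noncomputable def bet (l : ℕ) : ℝ := 2 ^ l * 2 * (l : ℝ) ^ l * Real.exp 2

/-- `card_mul_le` summed over the number `e ≤ p * l / 2` of points, with `p ^ p` and `p ^ e` compared
to `p!` and `e!`. -/
theorem bnd_conn {l : ℕ} (hl : 2 ≤ l) {p : ℕ} (hp : 1 ≤ p) :
    Bnd (Pconn l p) (bet l ^ p * gr l p ^ p) := by
  have hl' : (1 : ℝ) ≤ l := by exact_mod_cast (by omega : 1 ≤ l)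
  set x : ℝ := 2 ^ p * ((l : ℝ) ^ l) ^ p * Real.exp 2 ^ p * gr l p ^ p with hx
  have hx0 : 0 ≤ x := by have := gr_nonneg l p; positivity
  have h2pow : ∀ n : ℕ, ((n : ℝ)) ≤ 2 ^ n := fun n => by exact_mod_cast n.lt_two_pow_self.le
  have edges : ∀ C ∈ Pconn l p, 2 * (unionC C).card ≤ p * l := by
    rintro C ⟨⟨hc, hdc, hA⟩, -⟩
    obtain ⟨h, ε, hε, hne, hC⟩ := exists_mdl hdc hc
    have := sum_card_edgesAt hne
    rw [Fintype.card_fin] at this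
    rw [← this]
    refine (Finset.sum_le_card_nsmul _ _ l fun v _ => ?_).trans (by simp)
    rw [← Finset.card_image_of_injective _ hε]
    refine (hA _ ?_).2
    have : (edgesAt h v).image ε ∈ mdl h ε := mem_mdl.2 ⟨v, rfl⟩
    exact (congrArg (fun X => (edgesAt h v).image ε ∈ X) hC).mpr this
  have h1 := Bnd.biUnion (Finset.range (p * l)) (P := Pconn l p)
      (fun e => {C | C ∈ Pconn l p ∧ (unionC C).card = e}) (fun _ => x)
      (fun e _ => ?_) (fun C hC => ⟨_, ?_, hC, rfl⟩)
  · refine h1.mono subset_rfl ?_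
    rw [Finset.sum_const, Finset.card_range, nsmul_eq_mul]
    calc ((p * l : ℕ) : ℝ) * x ≤ 2 ^ (p * l) * x :=
          mul_le_mul_of_nonneg_right (h2pow _) hx0
      _ = _ := by rw [hx, bet, mul_comm p l, pow_mul]; ring
  · refine Bnd.of_forall fun R hR hiso => ?_
    rcases R.eq_empty_or_nonempty with rfl | ⟨C0, hC0⟩
    · simpa using hx0
    have he2 : 2 * e ≤ p * l := by
      have := edges C0 (hR C0 hC0).1
      rwa [(hR C0 hC0).2] at this
    have hmain := card_mul_le (V := Fin p) (E := Fin e) (⟨0, hp⟩ : Fin p) (l := l) (by omega) R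
      (by
        rintro C hC
        obtain ⟨⟨⟨hc, hdc, hA⟩, hcon⟩, rfl⟩ := hR C hC
        obtain ⟨h, ε, hε, hne, hCm⟩ := exists_mdl hdc hc
        have hmem : ∀ v, (edgesAt h v).image ε ∈ C := by
          intro v
          have : (edgesAt h v).image ε ∈ mdl h ε := mem_mdl.2 ⟨v, rfl⟩
          exact (congrArg (fun X => (edgesAt h v).image ε ∈ X) hCm).mpr this
        refine ⟨h, ε, hε, hCm, fun v => ?_, ?_⟩
        · rw [← Finset.card_image_of_injective _ hε]
          exact (hA _ (hmem v)).2
        · refine connected_graph hε (fun v => ?_) ((congrArg ConnectedColl hCm).mp hcon)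
          have := (hA _ (hmem v)).1
          rw [Finset.card_image_of_injective _ hε] at this
          exact Finset.card_pos.1 this) hiso
    simp only [Fintype.card_fin] at hmain
    have hR' : (R.card : ℝ) * (p.factorial * e.factorial) ≤
        ((p : ℝ) * p) ^ e * (p * ((l : ℝ) ^ e * (l : ℝ) ^ e)) := by exact_mod_cast hmain
    have f1 := pow_le_exp_mul_factorial p p
    have f2 := pow_le_exp_mul_factorial p e
    have f3 := pow_le_gr hp he2
    have f4 : (l : ℝ) ^ e * (l : ℝ) ^ e ≤ ((l : ℝ) ^ l) ^ p := by
      rw [← pow_add, ← pow_mul]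
      refine pow_le_pow_right₀ hl' ?_
      rw [mul_comm l p]
      omega
    have hg := gr_nonneg l p
    have hfac : (0 : ℝ) < p.factorial * e.factorial := by positivity
    refine le_of_mul_le_mul_right (hR'.trans ?_) hfac
    calc ((p : ℝ) * p) ^ e * (p * ((l : ℝ) ^ e * (l : ℝ) ^ e))
        = ((p : ℝ) ^ e * (p : ℝ) ^ e) * (p * ((l : ℝ) ^ e * (l : ℝ) ^ e)) := by rw [mul_pow]
      _ ≤ ((Real.exp p * e.factorial) * (gr l p ^ p * (Real.exp p * p.factorial))) *
            (2 ^ p * ((l : ℝ) ^ l) ^ p) := by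
          refine mul_le_mul (mul_le_mul f2 (f3.trans ?_) (by positivity) (by positivity))
            (mul_le_mul (h2pow p) f4 (by positivity) (by positivity)) (by positivity)
            (by positivity)
          exact mul_le_mul_of_nonneg_left f1 (by positivity)
      _ = x * (p.factorial * e.factorial) := by
          have : Real.exp 2 ^ p = Real.exp p * Real.exp p := by
            rw [← Real.exp_nat_mul, ← Real.exp_add]
            ring_nf
          rw [hx, this]
          ring
  · have := edges C hC
    have : 0 < p * l := Nat.mul_pos hp (by omega)
    rw [Finset.mem_range]
    omega

theorem bnd_star {l : ℕ} (hl : 2 ≤ l) (p : ℕ) :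
    Bnd (Pall l p) ((2 * bet l) ^ p * gr l p ^ p) :=
  bnd_all (by unfold bet; positivity) (gr l) (gr_nonneg l) (gr_mono hl)
    (fun _ hq => bnd_conn hl hq) p

/-! quotients -/

/-- Isomorphism is an equivalence relation, so the quotient identifies exactly isomorphic
collections. -/
theorem quot_eq {P : Multiset (Finset ℕ) → Prop} {C D : {C // P C}} :
    Quot.mk (fun C D : {C // P C} => Isomorphic C.1 D.1) C = Quot.mk _ D ↔
      Isomorphic C.1 D.1 := by
  have he : Equivalence (fun C D : {C // P C} => Isomorphic C.1 D.1) :=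
    ⟨fun C => Isomorphic.refl _, fun h => h.symm, fun h h' => h.trans h'⟩
  constructor
  · intro h
    exact (Equivalence.eqvGen_iff he).1 (Quot.eqvGen_exact h)
  · exact fun h => Quot.sound h

/-- The bound applies to the cardinality of the quotient type, which is in particular finite, so
that `Nat.card` has no junk value. -/
theorem Bnd.quot {P : Multiset (Finset ℕ) → Prop} {x : ℝ} (h : Bnd {C | P C} x) :
    Finite (Quot (fun C D : {C // P C} => Isomorphic C.1 D.1)) ∧
      (Nat.card (Quot (fun C D : {C // P C} => Isomorphic C.1 D.1)) : ℝ) ≤ x := by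
  obtain ⟨R, hR, hP⟩ := h
  have : ∀ z : Quot (fun C D : {C // P C} => Isomorphic C.1 D.1),
      ∃ D : R, ∃ C : {C // P C}, Quot.mk _ C = z ∧ Isomorphic C.1 D.1 := by
    intro z
    induction z using Quot.ind with
    | mk C =>
      obtain ⟨D, hD, hCD⟩ := hP C.1 C.2
      exact ⟨⟨D, hD⟩, C, rfl, hCD⟩
  choose f c hc hf using this
  have hinj : f.Injective := by
    intro z w hzw
    rw [← hc z, ← hc w, quot_eq]
    exact (hf z).trans (hzw ▸ (hf w).symm)
  refine ⟨Finite.of_injective f hinj, le_trans ?_ hR⟩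
  have := Nat.card_le_card_of_injective f hinj
  simp only [Nat.card_eq_fintype_card, Fintype.card_coe] at this
  exact_mod_cast this

end

/-! ### Regular graphs with a Hamiltonian cycle -/

section
open Finset

/-- A connected collection of nonempty sets is its own only component. -/
theorem standard_of_connected {C : Multiset (Finset ℕ)} (hcon : ConnectedColl C)
    (hne : ∀ A ∈ C, A.Nonempty) : IsStandard C := by
  have key : ∀ D, IsComponent C D → D = C := by
    rintro D ⟨hle, h0, -, hsep⟩
    obtain ⟨A, hA⟩ := Multiset.exists_mem_of_ne_zero h0
    have hAC := Multiset.mem_of_le hle hA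
    have hall : ∀ B ∈ C, B ∈ D := by
      intro B hB
      induction hcon A hAC B hB with
      | refl => exact hA
      | @tail X Y _ hXY ih =>
        obtain ⟨hX, hY, hint⟩ := hXY
        by_contra hYD
        have : Y ∈ C - D := by
          rw [← Multiset.count_pos, Multiset.count_sub, Multiset.count_eq_zero_of_notMem hYD,
            tsub_zero]
          exact Multiset.count_pos.2 hY
        have := hsep Y this X (ih hX)
        rw [Finset.inter_comm] at this
        exact hint.ne_empty this
    by_contra hDC
    have hpos : C - D ≠ 0 := by
      intro h
      exact hDC (le_antisymm hle (tsub_eq_zero_iff_le.1 h))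
    obtain ⟨B, hB⟩ := Multiset.exists_mem_of_ne_zero hpos
    have hBC := Multiset.mem_of_le (Multiset.sub_le_self _ _) hB
    have := hsep B hB B (hall B hBC)
    rw [Finset.inter_self] at this
    exact (hne B hBC).ne_empty this
  intro D E hD hE hDE
  exact (hDE ((key D hD).trans (key E hE).symm)).elim

/-- The predicate defining `muStandard l p`. -/
abbrev StdP (l p : ℕ) (C : Multiset (Finset ℕ)) : Prop :=
  Multiset.card C = p ∧ IsDoubleCover C ∧ IsStandard C ∧ ∀ A ∈ C, A.card = l

/-- A graph containing a Hamiltonian cycle has a connected dual. -/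
theorem connected_mdl {n : ℕ} {E : Type} [Fintype E] (h : E → Fin (n + 2) × Fin (n + 2))
    (ε : E → ℕ) (cyc : Fin (n + 2) → E) (hcyc : ∀ i, h (cyc i) = (i, i + 1)) :
    ConnectedColl (mdl h ε) := by
  classical
  set rel := fun X Y => X ∈ mdl h ε ∧ Y ∈ mdl h ε ∧ (X ∩ Y).Nonempty with hrel
  have hsymm : Std.Symm rel :=
    ⟨fun X Y h => ⟨h.2.1, h.1, by rw [Finset.inter_comm]; exact h.2.2⟩⟩
  have key : ∀ v, Relation.ReflTransGen rel ((edgesAt h 0).image ε) ((edgesAt h v).image ε) := by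
    intro v
    induction v using Fin.induction with
    | zero => exact Relation.ReflTransGen.refl
    | succ i ih =>
      refine ih.tail ⟨mem_mdl.2 ⟨_, rfl⟩, mem_mdl.2 ⟨_, rfl⟩, ε (cyc i.castSucc), ?_⟩
      rw [Finset.mem_inter]
      refine ⟨Finset.mem_image_of_mem _ (mem_edgesAt.2 (Or.inl ?_)),
        Finset.mem_image_of_mem _ (mem_edgesAt.2 (Or.inr ?_))⟩
      · rw [hcyc]
      · rw [hcyc, Fin.coeSucc_eq_succ]
  intro A hA B hB
  obtain ⟨v, rfl⟩ := mem_mdl.1 hA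
  obtain ⟨w, rfl⟩ := mem_mdl.1 hB
  exact (Relation.ReflTransGen.stdSymm.symm _ _ (key v)).trans (key w)

/-- Counting classes of graphs with a distinguished Hamiltonian cycle `cyc` and prescribed source
map: a class is determined, within `T`, by the image of vertex `0` and the number of each edge
at its source, so no class meets `T` in more than `p * l ^ |E|` members. -/
theorem card_le_muStandard {n l : ℕ} (hl : 2 ≤ l) {E : Type} [Fintype E]
    (hfin : Finite (Quot (fun C D : {C // StdP l (n + 2) C} => Isomorphic C.1 D.1)))
    (src : E → Fin (n + 2)) (cyc : Fin (n + 2) → E) (hsrc : ∀ i, src (cyc i) = i)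
    (T : Finset (E → Fin (n + 2))) (hne : ∀ t ∈ T, ∀ e, src e ≠ t e)
    (hcyc : ∀ t ∈ T, ∀ i, t (cyc i) = i + 1)
    (hdeg : ∀ t ∈ T, ∀ v, (edgesAt (fun e => (src e, t e)) v).card = l) :
    T.card ≤ ((n + 2) * l ^ Fintype.card E) * muStandard l (n + 2) := by
  classical
  obtain ⟨ε, hε⟩ : ∃ ε : E → ℕ, ε.Injective :=
    ⟨fun e => (Fintype.equivFin E e : ℕ), fun a b h =>
      (Fintype.equivFin E).injective (Fin.ext h)⟩
  have hstd : ∀ t : T, StdP l (n + 2) (mdl (fun e => (src e, t.1 e)) ε) := by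
    rintro ⟨t, ht⟩
    have hcard : ∀ A ∈ mdl (fun e => (src e, t e)) ε, A.card = l := by
      intro A hA
      obtain ⟨v, rfl⟩ := mem_mdl.1 hA
      rw [Finset.card_image_of_injective _ hε]
      exact hdeg t ht v
    refine ⟨by rw [card_mdl, Fintype.card_fin], isDoubleCover_mdl (hne t ht) hε,
      standard_of_connected (connected_mdl _ _ cyc fun i => Prod.ext (hsrc i) (hcyc t ht i))
        fun A hA => Finset.card_pos.1 (by rw [hcard A hA]; omega), hcard⟩
  let Q := Quot (fun C D : {C // StdP l (n + 2) C} => Isomorphic C.1 D.1)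
  have : Fintype Q := Fintype.ofFinite Q
  let f : T → Q := fun t => Quot.mk _ ⟨_, hstd t⟩
  have hmain := Finset.card_le_mul_card_image (f := f) (univ : Finset T)
    ((n + 2) * l ^ Fintype.card E) ?_
  · rw [Finset.card_univ, Fintype.card_coe] at hmain
    refine hmain.trans (Nat.mul_le_mul_left _ ?_)
    refine (Finset.card_le_univ _).trans ?_
    rw [← Nat.card_eq_fintype_card]
    rfl
  · intro z hz
    obtain ⟨t, -, rfl⟩ := Finset.mem_image.1 hz
    set h : E → Fin (n + 2) × Fin (n + 2) := fun e => (src e, t.1 e) with hh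
    have hdt : ∀ v, (edgesAt h v).card ≤ l := fun v => (hdeg t.1 t.2 v).le
    obtain ⟨s, hs⟩ := exists_slot (by omega : 0 < l) h
    have hs := hs hdt
    have hiso : ∀ u : {u : T // f u = f t}, ∃ (σ : Equiv.Perm (Fin (n + 2))) (τ : E → E),
        ∀ v e, Inc (fun e => (src e, u.1.1 e)) v e → Inc h (σ v) (τ e) :=
      fun u => exists_graph_iso hε (quot_eq.1 u.2)
    choose σ τ hστ using hiso
    -- The isomorphism `σ u` onto the fixed graph `h` is found by walking along the cycle: `code u`
    -- tells where vertex `0` goes and which edge at the current vertex to follow.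
    let code : {u : T // f u = f t} → Fin (n + 2) × (E → Fin l) :=
      fun u => (σ u 0, fun e => s (σ u (src e)) (τ u e))
    have hcode : code.Injective := by
      intro u w huw
      simp only [code, Prod.mk.injEq] at huw
      obtain ⟨h0, hc⟩ := huw
      -- If the isomorphisms agree at the source of an edge, the slot tells them to send the edge to
      -- the same edge of `h`, so they agree at its other end.
      have step : ∀ e, σ u (src e) = σ w (src e) → σ u (u.1.1 e) = σ w (w.1.1 e) := by
        intro e he
        have iu := hστ u (src e) e (Or.inl rfl)
        have iw := hστ w (src e) e (Or.inl rfl)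
        have hτ : τ u e = τ w e := by
          refine hs _ _ _ iu (he ▸ iw) ?_
          have : s (σ u (src e)) (τ u e) = s (σ w (src e)) (τ w e) := congrFun hc e
          rw [this, he]
        have ju := hστ u (u.1.1 e) e (Or.inr rfl)
        have jw := hστ w (w.1.1 e) e (Or.inr rfl)
        have nu : σ u (src e) ≠ σ u (u.1.1 e) := (σ u).injective.ne (hne _ u.1.2 e)
        have nw : σ w (src e) ≠ σ w (w.1.1 e) := (σ w).injective.ne (hne _ w.1.2 e)
        rw [← hτ, ← he] at iw
        rw [← hτ] at jw
        rw [← he] at nw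
        unfold Inc at iu ju jw
        grind
      have hσ : ∀ v, σ u v = σ w v := by
        intro v
        induction v using Fin.induction with
        | zero => exact h0
        | succ i ih =>
          have := step (cyc i.castSucc) (by rw [hsrc]; exact ih)
          rw [hcyc _ u.1.2, hcyc _ w.1.2, Fin.coeSucc_eq_succ] at this
          exact this
      refine Subtype.ext (Subtype.ext (funext fun e => ?_))
      have := step e (hσ _)
      rw [hσ] at this
      exact (σ w).injective this
    have := Fintype.card_le_of_injective code hcode
    rw [Fintype.card_subtype] at this
    simpa using this

/-- The edges of the graphs built below: a Hamiltonian cycle, `k` further two-factors, and `r`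
perfect matchings. -/
abbrev Edge (n k r q : ℕ) : Type := Fin (n + 2) ⊕ ((Fin k × Fin (n + 2)) ⊕ (Fin r × Fin q))

/-- The data of a graph: a derangement for each of the `k` two-factors, and a bijection between
the two halves of the vertex set for each of the `r` matchings. -/
abbrev Data (n k r q : ℕ) : Type :=
  (Fin k → derangements (Fin (n + 2))) × (Fin r → Equiv.Perm (Fin q))

section construct
variable {n k r q : ℕ}

/-- The embedding of the first half of the vertices. -/
def lo (hq : 2 * q ≤ n + 2) (i : Fin q) : Fin (n + 2) := ⟨i, by omega⟩

/-- The embedding of the second half of the vertices. -/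
def hi (hq : 2 * q ≤ n + 2) (i : Fin q) : Fin (n + 2) := ⟨q + i, by omega⟩

/-- The source of each edge. -/
def source (hq : 2 * q ≤ n + 2) : Edge n k r q → Fin (n + 2) :=
  Sum.elim id (Sum.elim Prod.snd fun x => lo hq x.2)

/-- The target of each edge in the graph with data `x`. -/
def target (hq : 2 * q ≤ n + 2) (x : Data n k r q) : Edge n k r q → Fin (n + 2) :=
  Sum.elim (fun i => i + 1) (Sum.elim (fun y => (x.1 y.1).1 y.2) fun y => hi hq (x.2 y.1 y.2))

theorem source_ne_target (hq : 2 * q ≤ n + 2) (x : Data n k r q) (e : Edge n k r q) :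
    source hq e ≠ target hq x e := by
  rcases e with i | ⟨j, i⟩ | ⟨j, i⟩
  · simp [source, target]
  · exact ((x.1 j).2 i).symm
  · simp only [source, target, Sum.elim_inr, lo, hi, ne_eq, Fin.mk.injEq]
    omega

theorem target_injective (hq : 2 * q ≤ n + 2) :
    (target hq : Data n k r q → Edge n k r q → Fin (n + 2)).Injective := by
  rintro ⟨s, π⟩ ⟨s', π'⟩ h
  refine Prod.ext (funext fun j => Subtype.ext (Equiv.ext fun i => ?_))
    (funext fun j => Equiv.ext fun i => ?_)
  · exact congrFun h (Sum.inr (Sum.inl (j, i)))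
  · have : q + (π j i : ℕ) = q + (π' j i : ℕ) :=
      congrArg Fin.val (congrFun h (Sum.inr (Sum.inr (j, i))))
    exact Fin.ext (Nat.add_left_cancel this)

/-- The graph with data `x` is regular: the cycle and each derangement contribute `2` to every
degree, each matching contributes `1`. -/
theorem degree_eq (hq : 2 * q ≤ n + 2) (hr : r = 0 ∨ n + 2 = 2 * q) (x : Data n k r q)
    (v : Fin (n + 2)) :
    (edgesAt (fun e => (source hq e, target hq x e)) v).card = 2 * (k + 1) + r := by
  classical
  have h1 : edgesAt (fun e => (source hq e, target hq x e)) v =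
      univ.filter (fun e => v = source hq e) ∪ univ.filter (fun e => v = target hq x e) := by
    ext e
    simp [mem_edgesAt, Inc]
  have h2 : Disjoint (univ.filter (fun e : Edge n k r q => v = source hq e))
      (univ.filter (fun e => v = target hq x e)) := by
    rw [Finset.disjoint_filter]
    rintro e - he he'
    exact source_ne_target hq x e (he ▸ he')
  have hperm : ∀ σ : Equiv.Perm (Fin (n + 2)), ∑ i, (if v = σ i then 1 else 0) = 1 := by
    intro σ
    rw [Equiv.sum_comp σ (fun i => if v = i then 1 else 0)]
    simp
  have hmatch : ∀ j : Fin r, ∑ i, (if v = lo hq i then 1 else 0) +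
      ∑ i, (if v = hi hq (x.2 j i) then 1 else 0) = 1 := by
    intro j
    -- Having an index `j : Fin r` rules out `r = 0`.
    have hpq : n + 2 = 2 * q := by
      rcases hr with rfl | h
      · exact j.elim0
      · exact h
    rw [Equiv.sum_comp (x.2 j) (fun i => if v = hi hq i then 1 else 0)]
    have hinj : (Sum.elim (lo hq) (hi hq) : Fin q ⊕ Fin q → Fin (n + 2)).Injective := by
      rintro (i | i) (j | j) h <;>
        simp only [Sum.elim_inl, Sum.elim_inr, lo, hi, Fin.mk.injEq] at h
      · exact congrArg _ (Fin.ext h)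
      · omega
      · omega
      · exact congrArg _ (Fin.ext (by omega))
    have hbij := (Fintype.bijective_iff_injective_and_card _).2 ⟨hinj, by simp; omega⟩
    have := Equiv.sum_comp (Equiv.ofBijective _ hbij) (fun u => if v = u then 1 else 0)
    rw [Fintype.sum_sum_type] at this
    simpa using this
  have hsum : ∀ f : Edge n k r q → Fin (n + 2), (univ.filter fun e => v = f e).card =
      ∑ i, (if v = f (Sum.inl i) then 1 else 0) +
        (∑ j, ∑ i, (if v = f (Sum.inr (Sum.inl (j, i))) then 1 else 0) +
          ∑ j, ∑ i, (if v = f (Sum.inr (Sum.inr (j, i))) then 1 else 0)) := by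
    intro f
    rw [Finset.card_filter]
    simp only [Fintype.sum_sum_type, Fintype.sum_prod_type]
  have hS : (univ.filter fun e : Edge n k r q => v = source hq e).card =
      ∑ i, (if v = i then 1 else 0) + (∑ _j : Fin k, ∑ i, (if v = i then 1 else 0) +
        ∑ _j : Fin r, ∑ i, (if v = lo hq i then 1 else 0)) := hsum (source hq)
  have hT : (univ.filter fun e : Edge n k r q => v = target hq x e).card =
      ∑ i, (if v = i + 1 then 1 else 0) +
        (∑ j : Fin k, ∑ i, (if v = (x.1 j).1 i then 1 else 0) +
          ∑ j : Fin r, ∑ i, (if v = hi hq (x.2 j i) then 1 else 0)) := hsum (target hq x)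
  rw [h1, Finset.card_union_of_disjoint h2, hS, hT]
  have e1 : ∑ i, (if v = i then 1 else 0) = 1 := hperm 1
  have e2 : ∑ i, (if v = i + 1 then 1 else 0) = 1 := hperm (Equiv.addRight 1)
  have e3 : ∑ j : Fin k, ∑ i, (if v = (x.1 j).1 i then 1 else 0) = k := by
    rw [Finset.sum_congr rfl fun j _ => hperm (x.1 j).1]
    simp
  have e4 : ∑ j : Fin r, ∑ i, (if v = lo hq i then 1 else 0) +
      ∑ j : Fin r, ∑ i, (if v = hi hq (x.2 j i) then 1 else 0) = r := by
    rw [← Finset.sum_add_distrib, Finset.sum_congr rfl fun j _ => hmatch j]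
    simp
  rw [e1, e2, e3]
  simp only [Finset.sum_const, Finset.card_univ, Fintype.card_fin, smul_eq_mul, mul_one] at e4 ⊢
  omega

/-- From the recurrence `D (n + 2) = (n + 1) * (D n + D (n + 1))`. -/
theorem factorial_le_numDerangements (n : ℕ) : (n + 1).factorial ≤ numDerangements (n + 2) := by
  induction n with
  | zero => decide
  | succ n ih =>
    rw [numDerangements_add_two, Nat.factorial_succ]
    refine Nat.mul_le_mul_left _ (ih.trans ?_)
    exact Nat.le_add_left _ _

/-- `card_le_muStandard` applied to all graphs with data in `Data n k r q`. -/
theorem card_data_le (hfin : Finite (Quot (fun C D : {C // StdP (2 * (k + 1) + r) (n + 2) C} =>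
      Isomorphic C.1 D.1))) (hq : 2 * q ≤ n + 2) (hr : r = 0 ∨ n + 2 = 2 * q) :
    (n + 1).factorial ^ k * q.factorial ^ r ≤
      ((n + 2) * (2 * (k + 1) + r) ^ (n + 2 + (k * (n + 2) + r * q))) *
        muStandard (2 * (k + 1) + r) (n + 2) := by
  classical
  have h := card_le_muStandard (l := 2 * (k + 1) + r) (by omega) hfin
    (source hq : Edge n k r q → _) Sum.inl (fun _ => rfl)
    ((univ : Finset (Data n k r q)).image (target hq)) ?_ ?_ ?_
  · rw [Finset.card_image_of_injective _ (target_injective hq)] at h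
    simp only [Finset.card_univ, Fintype.card_prod, Fintype.card_fun, Fintype.card_fin,
      Fintype.card_sum, card_derangements_eq_numDerangements, Fintype.card_perm] at h
    exact (Nat.mul_le_mul_right _
      (Nat.pow_le_pow_left (factorial_le_numDerangements n) k)).trans h
  · intro t ht
    obtain ⟨x, -, rfl⟩ := Finset.mem_image.1 ht
    exact source_ne_target hq x
  · intro t ht i
    obtain ⟨x, -, rfl⟩ := Finset.mem_image.1 ht
    rfl
  · intro t ht v
    obtain ⟨x, -, rfl⟩ := Finset.mem_image.1 ht
    exact degree_eq hq hr x v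

end construct
end

/-! ### The lower bound and the comparison -/

section
open Finset

theorem stdP_mem_Pall {l p : ℕ} (hl : 2 ≤ l) {C : Multiset (Finset ℕ)} (hC : StdP l p C) :
    C ∈ Pall l p :=
  ⟨hC.1, hC.2.1, fun A hA => by rw [hC.2.2.2 A hA]; omega⟩

theorem finite_std {l : ℕ} (hl : 2 ≤ l) (p : ℕ) :
    Finite (Quot (fun C D : {C // StdP l p C} => Isomorphic C.1 D.1)) :=
  (((bnd_star hl p).mono (fun _ hC => stdP_mem_Pall hl hC) le_rfl).quot (P := StdP l p)).1

theorem muStandard_le_muStarFull {l : ℕ} (hl : 2 ≤ l) (p : ℕ) :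
    muStandard l p ≤ muStarFull l p := by
  have hfin := ((bnd_star hl p).quot (P := fun C => C ∈ Pall l p)).1
  let f : Quot (fun C D : {C // StdP l p C} => Isomorphic C.1 D.1) →
      Quot (fun C D : {C // C ∈ Pall l p} => Isomorphic C.1 D.1) :=
    Quot.map (fun C => ⟨C.1, stdP_mem_Pall hl C.2⟩) fun _ _ h => h
  refine @Nat.card_le_card_of_injective _ _ hfin f fun z w hzw => ?_
  induction z using Quot.ind with | mk C => ?_
  induction w using Quot.ind with | mk D => ?_
  have : Isomorphic C.1 D.1 := (quot_eq (P := fun C => C ∈ Pall l p)).1 hzw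
  exact Quot.sound this

theorem muStarFull_le {l : ℕ} (hl : 2 ≤ l) (p : ℕ) :
    (muStarFull l p : ℝ) ≤ (2 * bet l) ^ p * (p : ℝ) ^ ((p : ℝ) * ((l : ℝ) / 2 - 1)) := by
  rw [← gr_pow]
  exact ((bnd_star hl p).quot (P := fun C => C ∈ Pall l p)).2

/-- The base of the exponential factor in the lower bound is the inverse of this number. -/
noncomputable def alp (l : ℕ) : ℝ := (2 * Real.exp 1) ^ l * 2 * (l : ℝ) ^ l

theorem pow_self_le_factorial (n : ℕ) :
    ((n + 2 : ℕ) : ℝ) ^ (n + 2) ≤ (2 * Real.exp 1) ^ (n + 2) * (n + 1).factorial := by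
  have h := pow_le_exp_mul_factorial (n + 2) (n + 2)
  have h2 : ((n + 2 : ℕ) : ℝ) ≤ 2 ^ (n + 2) := by exact_mod_cast (n + 2).lt_two_pow_self.le
  refine h.trans ?_
  rw [Nat.factorial_succ (n + 1), mul_pow, Real.exp_one_pow, Nat.cast_mul]
  calc Real.exp ((n + 2 : ℕ) : ℝ) * (((n + 2 : ℕ) : ℝ) * ((n + 1).factorial : ℝ))
      ≤ Real.exp ((n + 2 : ℕ) : ℝ) * ((2 : ℝ) ^ (n + 2) * ((n + 1).factorial : ℝ)) := by gcongr
    _ = _ := by ring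

theorem double_pow_le_factorial (q : ℕ) :
    ((2 * q : ℕ) : ℝ) ^ q ≤ (2 * Real.exp 1) ^ (2 * q) * q.factorial := by
  have h := pow_le_exp_mul_factorial q q
  have he : (1 : ℝ) ≤ 2 * Real.exp 1 := by
    have := Real.one_le_exp zero_le_one
    linarith
  calc ((2 * q : ℕ) : ℝ) ^ q = 2 ^ q * (q : ℝ) ^ q := by push_cast; rw [mul_pow]
    _ ≤ 2 ^ q * (Real.exp q * q.factorial) := by gcongr
    _ = (2 * Real.exp 1) ^ q * q.factorial := by rw [mul_pow, Real.exp_one_pow]; ring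
    _ ≤ _ := by
      gcongr ?_ * _
      exact pow_le_pow_right₀ he (by omega)

/-- The lower bound for `l = 2 * (k + 1) + r`: with `p = n + 2`, the main term `p ^ (p * (l / 2 - 1))`
is `(p ^ p) ^ k * (p ^ q) ^ r`, and the factors are compared to `(p - 1)!` and `q!`. -/
theorem gr_le_alp_mul {k r q n : ℕ} (hr1 : r ≤ 1) (hq : 2 * q ≤ n + 2)
    (hr : r = 0 ∨ n + 2 = 2 * q) :
    gr (2 * (k + 1) + r) (n + 2) ^ (n + 2) ≤
      alp (2 * (k + 1) + r) ^ (n + 2) * muStandard (2 * (k + 1) + r) (n + 2) := by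
  have hdata := card_data_le (k := k) (finite_std (l := 2 * (k + 1) + r) (by omega) (n + 2)) hq hr
  set l := 2 * (k + 1) + r with hl
  set S := muStandard l (n + 2) with hS
  set c : ℝ := 2 * Real.exp 1 with hc
  have hc1 : (1 : ℝ) ≤ c := by
    have := Real.one_le_exp zero_le_one
    linarith
  have hl1 : (1 : ℝ) ≤ l := by exact_mod_cast (by omega : 1 ≤ l)
  have hdata' : ((n + 1).factorial : ℝ) ^ k * (q.factorial : ℝ) ^ r ≤
      (((n + 2 : ℕ) : ℝ) * (l : ℝ) ^ (n + 2 + (k * (n + 2) + r * q))) * S := by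
    exact_mod_cast hdata
  have hgr : gr l (n + 2) ^ (n + 2) =
      (((n + 2 : ℕ) : ℝ) ^ (n + 2)) ^ k * (((n + 2 : ℕ) : ℝ) ^ q) ^ r := by
    rw [gr_pow, ← pow_mul, ← pow_mul, ← pow_add, ← Real.rpow_natCast]
    congr 1
    rw [hl]
    push_cast
    rcases hr with rfl | h
    · push_cast; ring
    · have : (n : ℝ) + 2 = 2 * q := by exact_mod_cast h
      rw [this]; ring
  have hmatch : (((n + 2 : ℕ) : ℝ) ^ q) ^ r ≤ (c ^ (n + 2) * q.factorial) ^ r := by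
    rcases hr with rfl | h
    · simp
    · have := double_pow_le_factorial q
      rw [← h] at this
      gcongr
  have hexp : n + 2 + (k * (n + 2) + r * q) ≤ l * (n + 2) := by
    rw [hl]
    nlinarith [Nat.zero_le (k * n), Nat.zero_le (r * n), Nat.mul_le_mul_left r (by omega : q ≤ n + 2)]
  calc gr l (n + 2) ^ (n + 2)
      ≤ (c ^ (n + 2) * (n + 1).factorial) ^ k * (c ^ (n + 2) * q.factorial) ^ r := by
        rw [hgr]
        gcongr
        exact pow_self_le_factorial n
    _ = (c ^ (n + 2)) ^ (k + r) * (((n + 1).factorial : ℝ) ^ k * (q.factorial : ℝ) ^ r) := by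
        rw [mul_pow, mul_pow, pow_add]; ring
    _ ≤ (c ^ (n + 2)) ^ l * ((2 ^ (n + 2) * (l : ℝ) ^ (l * (n + 2))) * S) := by
        have h2 : ((n + 2 : ℕ) : ℝ) ≤ 2 ^ (n + 2) := by
          exact_mod_cast (n + 2).lt_two_pow_self.le
        refine mul_le_mul (pow_le_pow_right₀ (one_le_pow₀ hc1) (by omega)) (hdata'.trans ?_)
          (by positivity) (by positivity)
        gcongr
    _ = alp l ^ (n + 2) * S := by
        rw [alp, ← hc, mul_pow _ ((l : ℝ) ^ l), mul_pow _ (2 : ℝ), ← pow_mul, ← pow_mul,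
          ← pow_mul, mul_comm (n + 2) l]
        ring

theorem le_muStandard {l p : ℕ} (hl : 2 ≤ l) (hp : 2 ≤ p) (hpl : Even (p * l)) :
    (alp l)⁻¹ ^ p * (p : ℝ) ^ ((p : ℝ) * ((l : ℝ) / 2 - 1)) ≤ muStandard l p := by
  have halp : 0 < alp l := by
    have : (0 : ℝ) < l := by exact_mod_cast (by omega : 0 < l)
    unfold alp
    positivity
  rw [← gr_pow, inv_pow, inv_mul_le_iff₀ (by positivity)]
  obtain ⟨n, rfl⟩ : ∃ n, p = n + 2 := ⟨p - 2, by omega⟩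
  obtain ⟨k, r, hr1, rfl⟩ : ∃ k r, r ≤ 1 ∧ l = 2 * (k + 1) + r :=
    ⟨l / 2 - 1, l % 2, by omega, by omega⟩
  refine gr_le_alp_mul (q := (n + 2) / 2) hr1 (by omega) ?_
  rcases Nat.even_mul.1 hpl with h | h
  · obtain ⟨m, hm⟩ := h
    exact Or.inr (by omega)
  · obtain ⟨m, hm⟩ := h
    exact Or.inl (by omega)

end

/-- for every `l ≥ 2` there are constants `a(l), b(l) > 0` with
`a(l)^p p^{p(l/2-1)} ≤ μ_{l,p}(standard) ≤ μ*_{l,p}(full) ≤ b(l)^p p^{p(l/2-1)}`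
for all `p ≥ 2` with `pl` even. -/
theorem stmt4 (l : ℕ) (hl : 2 ≤ l) :
    ∃ a b : ℝ, 0 < a ∧ 0 < b ∧ ∀ p : ℕ, 2 ≤ p → Even (p * l) →
      a ^ p * (p : ℝ) ^ ((p : ℝ) * ((l : ℝ) / 2 - 1)) ≤ (muStandard l p : ℝ) ∧
      muStandard l p ≤ muStarFull l p ∧
      (muStarFull l p : ℝ) ≤ b ^ p * (p : ℝ) ^ ((p : ℝ) * ((l : ℝ) / 2 - 1)) := by
  have hl' : (0 : ℝ) < l := by exact_mod_cast (by omega : 0 < l)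
  refine ⟨(alp l)⁻¹, 2 * bet l, by unfold alp; positivity, by unfold bet; positivity,
    fun p hp hpl => ⟨le_muStandard hl hp hpl, muStandard_le_muStarFull hl p, muStarFull_le hl p⟩⟩
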